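/- Hadamard-type bound for Pfaffians of matrix kernels. Let K : ℝ × ℝ → (2×2 real matrices) be a kernel satisfying the skew-symmetry K_{ab}(x,y) = −K_{ba}(y,x) for a,b ∈ {1,2}, and suppose there exist constants C > 0 and a > b ≥ 0 such that for all x, y ∈ ℝ: |K_{11}(x,y)| ≤ C e^{−ax−ay}, |K_{12}(x,y)| ≤ C e^{−ax+by}, |K_{21}(x,y)| ≤ C e^{bx−ay}, and |K_{22}(x,y)| ≤ C e^{bx+by}. Then for every k ≥ 1 and all x_1, …, x_k ∈ ℝ, | Pf( [K(x_i, x_j)]_{i,j=1}^k ) | ≤ (2k)^{k/2} C^k ∏_{i=1}^k e^{−(a−b) x_i}, where [K(x_i,x_j)]_{i,j=1}^k denotes the 2k×2k skew-symmetric matrix whose 2×2 block in position (i,j) is K(x_i,x_j). -/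

import Mathlib

/-!
Hadamard-type bound for Pfaffians of `2×2`-matrix valued skew-symmetric kernels with
exponentially decaying entries:
`|Pf([K(x_i,x_j)]_{i,j=1}^k)| ≤ (2k)^{k/2} C^k ∏ e^{-(a-b)x_i}`.
-/

noncomputable section

/-- Pfaffian of a `2k × 2k` real matrix, via the sum over permutations. -/
def pfaffianR {k : ℕ} (A : Matrix (Fin (2*k)) (Fin (2*k)) ℝ) : ℝ :=
  (1 / (2^k * (Nat.factorial k) : ℝ)) *
    ∑ σ : Equiv.Perm (Fin (2*k)), ((Equiv.Perm.sign σ : ℤ) : ℝ) *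
      ∏ i : Fin k, A (σ ⟨2*i.1, by have := i.2; omega⟩) (σ ⟨2*i.1+1, by have := i.2; omega⟩)

/-- The `2k × 2k` matrix whose `2×2` block in position `(i,j)` is `K (x i) (x j)`. -/
def blockMatR {k : ℕ} (K : ℝ → ℝ → Matrix (Fin 2) (Fin 2) ℝ) (x : Fin k → ℝ) :
    Matrix (Fin (2*k)) (Fin (2*k)) ℝ :=
  fun r s => K (x ⟨r.1/2, by have := r.2; omega⟩) (x ⟨s.1/2, by have := s.2; omega⟩)
      ⟨r.1 % 2, by omega⟩ ⟨s.1 % 2, by omega⟩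

/-!
A skew-symmetric matrix `A` of size `2k` factors as `Pᵀ * J * P`, where `J` is the matrix of the
standard symplectic form: split hyperbolic planes off the alternating form of `A` until it vanishes.
Since `Pf (Pᵀ * J * P) = det P * Pf J` and `Pf J = 1 = det J`, it follows that `Pf A ^ 2 = det A`,
and the determinant is controlled by Hadamard's inequality. For a kernel bounded by
`C * w x s * w y t`, one factor `w` comes out of each row and one out of each column, leaving a
matrix with entries at most `C`, so that `|det A| ≤ (√(2k) * C) ^ (2k) * (∏ w) ^ 2`; take square
roots.
-/

section Hadamard

variable {n 𝕜 : Type*} [Fintype n] [DecidableEq n] [RCLike 𝕜]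

lemma norm_det_le_prod_norm_row (A : Matrix n n 𝕜) :
    ‖A.det‖ ≤ ∏ i, ‖WithLp.toLp 2 (A i)‖ := by
  let e := Fintype.equivFin n
  let v : Fin (Fintype.card n) → EuclideanSpace 𝕜 n := fun i => WithLp.toLp 2 (A (e.symm i))
  let b := (EuclideanSpace.basisFun n 𝕜).reindex e
  have hdim : Module.finrank 𝕜 (EuclideanSpace 𝕜 n) = Fintype.card (Fin (Fintype.card n)) := by
    simp
  let g := InnerProductSpace.gramSchmidtOrthonormalBasis hdim v
  have hdet : b.toBasis.det v = A.det := by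
    rw [Module.Basis.det_apply, ← Matrix.det_reindex_self e A, ← Matrix.det_transpose]
    rfl
  -- The matrix of `v` in its Gram–Schmidt basis `g` is triangular, with diagonal `⟪g i, v i⟫`.
  calc ‖A.det‖ = ‖b.toBasis.det g‖ * ‖g.toBasis.det v‖ := by
        rw [← norm_mul, ← hdet, ← smul_eq_mul, ← AlternatingMap.smul_apply, ← g.coe_toBasis,
          ← b.toBasis.det.eq_smul_basis_det g.toBasis]
    _ = ∏ i, ‖inner 𝕜 (g i) (v i)‖ := by
        rw [b.det_to_matrix_orthonormalBasis, one_mul,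
          InnerProductSpace.gramSchmidtOrthonormalBasis_det, norm_prod]
    _ ≤ ∏ i, ‖v i‖ := by
        gcongr with i
        simpa using norm_inner_le_norm (𝕜 := 𝕜) (g i) (v i)
    _ = ∏ i, ‖WithLp.toLp 2 (A i)‖ := e.symm.prod_comp fun i => ‖WithLp.toLp 2 (A i)‖

lemma norm_det_le_of_norm_le {A : Matrix n n 𝕜} {C : ℝ} (hA : ∀ i j, ‖A i j‖ ≤ C) :
    ‖A.det‖ ≤ (√(Fintype.card n) * C) ^ Fintype.card n := by
  have hrow (i : n) : ‖WithLp.toLp 2 (A i)‖ ≤ √(Fintype.card n) * C := by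
    have hC : 0 ≤ C := (norm_nonneg _).trans (hA i i)
    calc ‖WithLp.toLp 2 (A i)‖ = √(∑ j, ‖A i j‖ ^ 2) := EuclideanSpace.norm_eq _
      _ ≤ √(∑ _j : n, C ^ 2) := by gcongr with j; exact hA i j
      _ = √(Fintype.card n) * C := by simp [Real.sqrt_sq hC]
  calc ‖A.det‖ ≤ ∏ i, ‖WithLp.toLp 2 (A i)‖ := norm_det_le_prod_norm_row A
    _ ≤ ∏ _i : n, √(Fintype.card n) * C := by gcongr with i; exact hrow i
    _ = (√(Fintype.card n) * C) ^ Fintype.card n := by simp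

lemma norm_det_le_of_norm_le_mul {A : Matrix n n 𝕜} {C : ℝ} (hC : 0 ≤ C) {u v : n → ℝ}
    (hu : ∀ i, 0 ≤ u i) (hv : ∀ i, 0 ≤ v i) (hA : ∀ i j, ‖A i j‖ ≤ C * (u i * v j)) :
    ‖A.det‖ ≤ (√(Fintype.card n) * C) ^ Fintype.card n * ((∏ i, u i) * ∏ i, v i) := by
  -- Where `u i * v j = 0` the quotient is `0` by convention, which is right since then `A i j = 0`.
  let M : Matrix n n 𝕜 := .of fun i j => A i j / (u i * v j : ℝ)
  have hM (i j : n) : ‖M i j‖ ≤ C := by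
    have huv : 0 ≤ u i * v j := mul_nonneg (hu i) (hv j)
    simpa [M, abs_of_nonneg, hu, hv] using div_le_of_le_mul₀ huv hC (hA i j)
  have hAM : A = .of fun i j => (v j : 𝕜) * Matrix.of (fun i j => (u i : 𝕜) * M i j) i j := by
    ext i j
    by_cases huv : u i * v j = 0
    · have : A i j = 0 := by simpa [huv] using hA i j
      simp [M, this]
    · have : ((u i * v j : ℝ) : 𝕜) ≠ 0 := by exact_mod_cast huv
      simp only [M, Matrix.of_apply]
      field_simp
      push_cast
      ring
  have hdet : A.det = (∏ j, (v j : 𝕜)) * ((∏ i, (u i : 𝕜)) * M.det) := by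
    rw [hAM, Matrix.det_mul_row, Matrix.det_mul_column]
  calc ‖A.det‖ = ‖M.det‖ * ((∏ i, u i) * ∏ i, v i) := by
        simp only [hdet, norm_mul, norm_prod, RCLike.norm_ofReal, abs_of_nonneg, hu, hv]
        ring
    _ ≤ _ := by
        gcongr
        · exact mul_nonneg (Finset.prod_nonneg fun i _ => hu i) (Finset.prod_nonneg fun i _ => hv i)
        · exact norm_det_le_of_norm_le hM

end Hadamard

section ProdShear

variable {ι κ : Type*}

lemma sign_prodShear [Fintype ι] [DecidableEq ι] [Fintype κ] [DecidableEq κ]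
    (π : Equiv.Perm ι) (c : ι → Equiv.Perm κ) :
    Equiv.Perm.sign (Equiv.prodShear π c) =
      Equiv.Perm.sign π ^ Fintype.card κ * ∏ i, Equiv.Perm.sign (c i) := by
  have h : Equiv.prodShear π c =
      (Equiv.prodCongrLeft fun _ => π : Equiv.Perm (ι × κ)) * Equiv.prodCongrRight c := rfl
  rw [h, Equiv.Perm.sign_mul, Equiv.Perm.sign_prodCongrLeft, Equiv.Perm.sign_prodCongrRight,
    Finset.prod_const, Finset.card_univ]

lemma prodShear_injective [Nonempty κ] :
    Function.Injective fun q : Equiv.Perm ι × (ι → Equiv.Perm κ) => Equiv.prodShear q.1 q.2 := by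
  rintro ⟨π, c⟩ ⟨π', c'⟩ h
  have happly (i : ι) (s : κ) : (π i, c i s) = (π' i, c' i s) := DFunLike.congr_fun h (i, s)
  have hπ : π = π' := Equiv.ext fun i => congrArg Prod.fst (happly i (Classical.arbitrary κ))
  have hc : c = c' := funext fun i => Equiv.ext fun s => congrArg Prod.snd (happly i s)
  rw [hπ, hc]

lemma exists_eq_prodShear [Finite ι] [Finite κ] [Nonempty κ] (σ : Equiv.Perm (ι × κ))
    (hσ : ∀ i s t, (σ (i, s)).1 = (σ (i, t)).1) :
    ∃ (π : Equiv.Perm ι) (c : ι → Equiv.Perm κ), σ = Equiv.prodShear π c := by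
  obtain ⟨s₀⟩ := ‹Nonempty κ›
  have hfst : Function.Surjective fun i => (σ (i, s₀)).1 := fun j => by
    obtain ⟨⟨i, s⟩, his⟩ := σ.surjective (j, s₀)
    exact ⟨i, (hσ i s₀ s).trans (congrArg Prod.fst his)⟩
  have hsnd (i : ι) : Function.Injective fun s => (σ (i, s)).2 := fun s t hst =>
    congrArg Prod.snd (σ.injective (Prod.ext (hσ i s t) hst))
  exact ⟨.ofBijective _ (Finite.surjective_iff_bijective.1 hfst),
    fun i => .ofBijective _ (Finite.injective_iff_bijective.1 (hsnd i)),
    Equiv.ext fun ⟨i, s⟩ => Prod.ext (hσ i s s₀) rfl⟩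

end ProdShear

section AlternatingForm

open Module

variable {K V : Type*} [Field K] [AddCommGroup V] [Module K V]

lemma exists_eq_wedge_add_comp [FiniteDimensional K V] {B : LinearMap.BilinForm K V}
    (hB : B.IsAlt) (hB₀ : B ≠ 0) :
    ∃ (α β : Dual K V) (W : Submodule K V) (π : V →ₗ[K] W),
      finrank K W + 2 = finrank K V ∧
        ∀ x y, B x y = (α x * β y - β x * α y) + B (π x) (π y) := by
  obtain ⟨u, v, huv⟩ : ∃ u v, B u v = 1 := by
    obtain ⟨u, v, huv⟩ : ∃ u v, B u v ≠ 0 := by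
      by_contra! h
      exact hB₀ (LinearMap.ext₂ h)
    exact ⟨u, (B u v)⁻¹ • v, by simp [huv]⟩
  have hvu : B v u = -1 := by rw [← hB.neg_eq, huv]
  let φ : V →ₗ[K] K × K := (B u).prod (B v)
  have hφ : LinearMap.range φ = ⊤ := LinearMap.range_eq_top.2 fun ⟨a, b⟩ =>
    ⟨a • v - b • u, by simp [φ, huv, hvu, hB.self_eq_zero]⟩
  have hrank : finrank K (LinearMap.ker φ) + 2 = finrank K V := by
    rw [← φ.finrank_range_add_finrank_ker, hφ, finrank_top, finrank_prod, finrank_self, add_comm]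
  -- `p` projects onto the orthogonal complement of the hyperbolic plane spanned by `u` and `v`.
  let p : V →ₗ[K] V := .id + (B v).smulRight u - (B u).smulRight v
  have hp (x : V) : p x ∈ LinearMap.ker φ := by simp [φ, p, huv, hvu, hB.self_eq_zero]
  refine ⟨B u, B v, LinearMap.ker φ, p.codRestrict _ hp, hrank, fun x y => ?_⟩
  have hxu : B x u = -B u x := (hB.neg_eq u x).symm
  have hxv : B x v = -B v x := (hB.neg_eq v x).symm
  simp only [p, LinearMap.codRestrict_apply, LinearMap.sub_apply, LinearMap.add_apply,
    LinearMap.id_coe, id_eq, LinearMap.coe_smulRight, LinearMap.smul_apply, map_sub, map_add,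
    map_smul, smul_eq_mul, huv, hvu, hxu, hxv, hB.self_eq_zero]
  ring

lemma exists_eq_sum_wedge [FiniteDimensional K V] {B : LinearMap.BilinForm K V} (hB : B.IsAlt)
    {k : ℕ} (hk : finrank K V ≤ 2 * k) :
    ∃ α β : Fin k → Dual K V, ∀ x y, B x y = ∑ i, (α i x * β i y - β i x * α i y) := by
  induction k generalizing V with
  | zero =>
    have : Subsingleton V := finrank_zero_iff.1 (by simpa using hk)
    exact ⟨0, 0, fun x y => by simp [Subsingleton.elim x 0]⟩
  | succ k ih =>
    by_cases hB₀ : B = 0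
    · exact ⟨0, 0, fun x y => by simp [hB₀]⟩
    obtain ⟨α₀, β₀, W, π, hW, hBπ⟩ := exists_eq_wedge_add_comp hB hB₀
    obtain ⟨α, β, hαβ⟩ := ih (B := B.restrict W) (fun w => hB w) (by lia)
    refine ⟨Fin.cons α₀ fun i => α i ∘ₗ π, Fin.cons β₀ fun i => β i ∘ₗ π, fun x y => ?_⟩
    rw [hBπ, Fin.sum_univ_succ]
    exact congrArg (_ + ·) (hαβ (π x) (π y))

lemma isAlt_toBilin'_of_transpose_eq_neg {n R : Type*} [Fintype n] [DecidableEq n] [CommRing R]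
    [NoZeroDivisors R] [CharZero R] {A : Matrix n n R} (hA : A.transpose = -A) :
    A.toBilin'.IsAlt := by
  refine LinearMap.isAlt_iff_eq_neg_flip.2 (LinearMap.ext₂ fun v w => ?_)
  rw [LinearMap.neg_apply, LinearMap.neg_apply, LinearMap.flip_apply, Matrix.toBilin'_apply',
    Matrix.toBilin'_apply', Matrix.dotProduct_mulVec, ← Matrix.mulVec_transpose, hA,
    Matrix.neg_mulVec, neg_dotProduct, dotProduct_comm]

end AlternatingForm

section SymplecticMatrix

open scoped Kronecker

/-- The matrix of the standard symplectic form: one block `!![0, 1; -1, 0]` for each `i : ι` on the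
diagonal. In contrast to `Matrix.J`, the two basis vectors of each hyperbolic plane are adjacent. -/
def symplecticMatrix (ι R : Type*) [DecidableEq ι] [CommRing R] :
    Matrix (ι × Fin 2) (ι × Fin 2) R :=
  1 ⊗ₖ !![0, 1; -1, 0]

variable {ι R : Type*} [DecidableEq ι] [CommRing R]

lemma symplecticMatrix_apply_of_fst_ne {p q : ι × Fin 2} (hpq : p.1 ≠ q.1) :
    symplecticMatrix ι R p q = 0 := by
  simp [symplecticMatrix, Matrix.kroneckerMap_apply, hpq]

variable [Fintype ι]

lemma det_symplecticMatrix : (symplecticMatrix ι R).det = 1 := by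
  simp [symplecticMatrix, Matrix.det_kronecker]

lemma sign_mul_prod_symplecticMatrix_prodShear (π : Equiv.Perm ι) (c : ι → Equiv.Perm (Fin 2)) :
    (Equiv.Perm.sign (Equiv.prodShear π c) : ℤ) * ∏ i, symplecticMatrix ι R
      (Equiv.prodShear π c (i, 0)) (Equiv.prodShear π c (i, 1)) = 1 := by
  have hblock (i : ι) : symplecticMatrix ι R (Equiv.prodShear π c (i, 0))
      (Equiv.prodShear π c (i, 1)) = (Equiv.Perm.sign (c i) : ℤ) := by
    have hτ : ∀ τ : Equiv.Perm (Fin 2), τ = 1 ∨ τ = Equiv.swap 0 1 := by decide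
    rcases hτ (c i) with h | h <;> simp [symplecticMatrix, h]
  have hsign : Equiv.Perm.sign (Equiv.prodShear π c) = ∏ i, Equiv.Perm.sign (c i) := by
    rw [sign_prodShear, Fintype.card_fin, Int.units_sq, one_mul]
  simp only [hblock, hsign]
  rw [← Int.cast_prod, ← Units.coe_prod, ← Int.cast_mul, Int.units_coe_mul_self, Int.cast_one]

end SymplecticMatrix

section Pfaffian

open scoped Matrix Nat

variable {ι K : Type*} [Fintype ι] [DecidableEq ι] [Field K]

/-- The Pfaffian of a matrix made of `2 × 2` blocks, the index `(i, s)` standing for row `s` of the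
`i`-th block. This is the usual Pfaffian for skew-symmetric `A` in characteristic zero; in positive
characteristic the normalising factor may be `0⁻¹ = 0`. -/
def pfaffian (A : Matrix (ι × Fin 2) (ι × Fin 2) K) : K :=
  (2 ^ Fintype.card ι * (Fintype.card ι)! : K)⁻¹ *
    ∑ σ : Equiv.Perm (ι × Fin 2), (Equiv.Perm.sign σ : ℤ) * ∏ i, A (σ (i, 0)) (σ (i, 1))

/-- The Pfaffian of the Gram matrix `B (v p) (v q)`, as an alternating form in the vectors `v p`.
Alternating forms in a maximal number of vectors being unique up to a scalar, this gives the
behaviour of `pfaffian` under congruence. -/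
def pfaffianForm {V : Type*} [AddCommGroup V] [Module K V] (B : LinearMap.BilinForm K V) :
    V [⋀^ι × Fin 2]→ₗ[K] K :=
  let B₂ : MultilinearMap K (fun _ : Fin 2 => V) K :=
    { toFun := fun v => B (v 0) (v 1)
      map_update_add' := fun v s x y => by fin_cases s <;> simp
      map_update_smul' := fun v s a x => by fin_cases s <;> simp }
  (2 ^ Fintype.card ι * (Fintype.card ι)! : K)⁻¹ •
    (((MultilinearMap.mkPiAlgebra K ι K).compMultilinearMap fun _ => B₂).domDomCongr
      (Equiv.sigmaEquivProd ι (Fin 2))).alternatization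

lemma pfaffianForm_apply {V : Type*} [AddCommGroup V] [Module K V] (B : LinearMap.BilinForm K V)
    (v : ι × Fin 2 → V) : pfaffianForm B v = pfaffian (.of fun p q => B (v p) (v q)) := by
  simp [pfaffianForm, pfaffian, MultilinearMap.alternatization_apply, Units.smul_def, Sigma.curry]

lemma pfaffian_transpose_mul_mul (P A : Matrix (ι × Fin 2) (ι × Fin 2) K) :
    pfaffian (Pᵀ * A * P) = P.det * pfaffian A := by
  have hbasis : pfaffianForm A.toBilin' (Pi.basisFun K (ι × Fin 2)) = pfaffian A := by
    simp only [pfaffianForm_apply, Pi.basisFun_apply, Matrix.toBilin'_single]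
    rfl
  have hcol : pfaffianForm A.toBilin' P.col = pfaffian (Pᵀ * A * P) := by
    rw [pfaffianForm_apply]
    congr 1
    ext p q
    rw [Matrix.mul_assoc, Matrix.mul_apply', Matrix.of_apply, Matrix.toBilin'_apply']
    rfl
  calc pfaffian (Pᵀ * A * P)
      = (pfaffianForm A.toBilin' (Pi.basisFun K _) • (Pi.basisFun K _).det) P.col := by
        rw [← AlternatingMap.eq_smul_basis_det, hcol]
    _ = pfaffian A * Pᵀ.det := by
        rw [hbasis, AlternatingMap.smul_apply, Pi.basisFun_det_apply, smul_eq_mul]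
        rfl
    _ = P.det * pfaffian A := by rw [Matrix.det_transpose, mul_comm]

lemma pfaffian_symplecticMatrix [CharZero K] : pfaffian (symplecticMatrix ι K) = 1 := by
  have hsum : ∑ σ : Equiv.Perm (ι × Fin 2), (Equiv.Perm.sign σ : ℤ) *
      ∏ i, symplecticMatrix ι K (σ (i, 0)) (σ (i, 1)) =
        ∑ _q : Equiv.Perm ι × (ι → Equiv.Perm (Fin 2)), 1 := by
    -- Only the permutations that map blocks to blocks contribute, each of them `1`.
    refine (Fintype.sum_of_injective _ prodShear_injective _ _ (fun σ hσ => ?_) fun q =>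
      (sign_mul_prod_symplecticMatrix_prodShear q.1 q.2).symm).symm
    obtain ⟨i, hi⟩ : ∃ i, (σ (i, 0)).1 ≠ (σ (i, 1)).1 := by
      by_contra! h
      obtain ⟨π, c, rfl⟩ := exists_eq_prodShear σ fun i s t => by
        fin_cases s <;> fin_cases t <;> simp [h i]
      exact hσ ⟨(π, c), rfl⟩
    rw [Finset.prod_eq_zero (Finset.mem_univ i) (symplecticMatrix_apply_of_fst_ne hi), mul_zero]
  have hcount : ∑ _q : Equiv.Perm ι × (ι → Equiv.Perm (Fin 2)), (1 : K) =
      2 ^ Fintype.card ι * (Fintype.card ι)! := by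
    simp [Fintype.card_perm, mul_comm]
  have hfact : ((Fintype.card ι)! : K) ≠ 0 := Nat.cast_ne_zero.2 (Nat.factorial_ne_zero _)
  rw [pfaffian, hsum, hcount, inv_mul_cancel₀ (mul_ne_zero (pow_ne_zero _ two_ne_zero) hfact)]

lemma exists_eq_transpose_mul_symplecticMatrix_mul {A : Matrix (ι × Fin 2) (ι × Fin 2) K}
    (hA : A.toBilin'.IsAlt) :
    ∃ P : Matrix (ι × Fin 2) (ι × Fin 2) K, A = Pᵀ * symplecticMatrix ι K * P := by
  obtain ⟨α, β, hαβ⟩ := exists_eq_sum_wedge hA (k := Fintype.card ι) (by simp [mul_comm])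
  let e := Fintype.equivFin ι
  refine ⟨.of fun p q => ![α (e p.1), β (e p.1)] p.2 (Pi.single q 1), ?_⟩
  ext p q
  rw [← Matrix.toBilin'_single A, hαβ, ← e.sum_comp]
  simp [symplecticMatrix, Matrix.mul_apply, Fintype.sum_prod_type, Matrix.one_apply,
    Finset.sum_add_distrib, sub_eq_neg_add]

theorem pfaffian_sq [CharZero K] {A : Matrix (ι × Fin 2) (ι × Fin 2) K} (hA : Aᵀ = -A) :
    pfaffian A ^ 2 = A.det := by
  obtain ⟨P, hP⟩ := exists_eq_transpose_mul_symplecticMatrix_mul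
    (isAlt_toBilin'_of_transpose_eq_neg hA)
  rw [hP, pfaffian_transpose_mul_mul, pfaffian_symplecticMatrix, Matrix.det_mul, Matrix.det_mul,
    Matrix.det_transpose, det_symplecticMatrix]
  ring

theorem norm_pfaffian_le {𝕜 : Type*} [RCLike 𝕜] {A : Matrix (ι × Fin 2) (ι × Fin 2) 𝕜}
    (hA : Aᵀ = -A) {C : ℝ} (hC : 0 ≤ C) {d : ι × Fin 2 → ℝ} (hd : ∀ p, 0 ≤ d p)
    (hAd : ∀ p q, ‖A p q‖ ≤ C * (d p * d q)) :
    ‖pfaffian A‖ ≤ (√(2 * Fintype.card ι) * C) ^ Fintype.card ι * ∏ p, d p := by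
  have hprod : 0 ≤ ∏ p, d p := Finset.prod_nonneg fun p _ => hd p
  refine le_of_sq_le_sq ?_ (by positivity)
  calc ‖pfaffian A‖ ^ 2 = ‖A.det‖ := by rw [← norm_pow, pfaffian_sq hA]
    _ ≤ (√(Fintype.card (ι × Fin 2)) * C) ^ Fintype.card (ι × Fin 2) *
          ((∏ p, d p) * ∏ p, d p) := norm_det_le_of_norm_le_mul hC hd hd hAd
    _ = ((√(2 * Fintype.card ι) * C) ^ Fintype.card ι * ∏ p, d p) ^ 2 := by
      rw [Fintype.card_prod, Fintype.card_fin, Nat.cast_mul, Nat.cast_ofNat,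
        mul_comm (Fintype.card ι : ℝ)]
      ring

theorem pfaffian_hadamard_bound_general {X 𝕜 ι : Type*} [RCLike 𝕜] [Fintype ι] [DecidableEq ι]
    {K : X → X → Matrix (Fin 2) (Fin 2) 𝕜} (hskew : ∀ x y s t, K x y s t = -K y x t s)
    {C : ℝ} (hC : 0 ≤ C) {w : X → Fin 2 → ℝ} (hw : ∀ x s, 0 ≤ w x s)
    (hK : ∀ x y s t, ‖K x y s t‖ ≤ C * (w x s * w y t)) (x : ι → X) :
    ‖pfaffian (Matrix.comp ι ι (Fin 2) (Fin 2) 𝕜 (.of fun i j => K (x i) (x j)))‖ ≤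
      (√(2 * Fintype.card ι) * C) ^ Fintype.card ι * ∏ i, w (x i) 0 * w (x i) 1 := by
  have hbound := norm_pfaffian_le
    (A := Matrix.comp ι ι (Fin 2) (Fin 2) 𝕜 (.of fun i j => K (x i) (x j)))
    (Matrix.ext fun p q => hskew _ _ _ _) hC (d := fun p => w (x p.1) p.2)
    (fun p => hw _ _) fun p q => hK _ _ _ _
  simpa only [Fintype.prod_prod_type, Fin.prod_univ_two] using hbound

end Pfaffian

/-- The index `(i, s)`, row `s` of the `i`-th block, corresponds to `2 * i + s`. -/
def blockIndexEquiv (k : ℕ) : Fin k × Fin 2 ≃ Fin (2 * k) :=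
  finProdFinEquiv.trans (finCongr (mul_comm k 2))

lemma coe_blockIndexEquiv {k : ℕ} (p : Fin k × Fin 2) :
    (blockIndexEquiv k p : ℕ) = 2 * p.1 + p.2 := by
  simp [blockIndexEquiv, add_comm]

lemma pfaffianR_eq_pfaffian_submatrix {k : ℕ} (A : Matrix (Fin (2 * k)) (Fin (2 * k)) ℝ) :
    pfaffianR A = pfaffian (A.submatrix (blockIndexEquiv k) (blockIndexEquiv k)) := by
  have hfst (i : Fin k) : blockIndexEquiv k (i, 0) = ⟨2 * i, by lia⟩ :=
    Fin.ext (coe_blockIndexEquiv _)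
  have hsnd (i : Fin k) : blockIndexEquiv k (i, 1) = ⟨2 * i + 1, by lia⟩ :=
    Fin.ext (coe_blockIndexEquiv _)
  rw [pfaffianR, pfaffian, one_div, Fintype.card_fin]
  congr 1
  refine (Fintype.sum_equiv (blockIndexEquiv k).permCongr _ _ fun σ => ?_).symm
  simp [Equiv.Perm.sign_permCongr, Equiv.permCongr_apply, ← hfst, ← hsnd]

lemma submatrix_blockMatR {k : ℕ} (K : ℝ → ℝ → Matrix (Fin 2) (Fin 2) ℝ) (x : Fin k → ℝ) :
    (blockMatR K x).submatrix (blockIndexEquiv k) (blockIndexEquiv k) =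
      Matrix.comp _ _ _ _ ℝ (.of fun i j => K (x i) (x j)) := by
  have hdiv (p : Fin k × Fin 2) : (blockIndexEquiv k p : ℕ) / 2 = p.1 := by
    rw [coe_blockIndexEquiv]; lia
  have hmod (p : Fin k × Fin 2) : (blockIndexEquiv k p : ℕ) % 2 = p.2 := by
    rw [coe_blockIndexEquiv]; lia
  ext p q
  simp [blockMatR, hdiv, hmod]

/-- **Hadamard-type bound for Pfaffians of matrix kernels.** -/
theorem pfaffian_hadamard_bound
    (K : ℝ → ℝ → Matrix (Fin 2) (Fin 2) ℝ)
    (hskew : ∀ x y : ℝ, ∀ a b : Fin 2, K x y a b = - K y x b a)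
    (C a b : ℝ) (hC : 0 < C) (hb : 0 ≤ b) (hab : b < a)
    (h11 : ∀ x y : ℝ, |K x y 0 0| ≤ C * Real.exp (-a*x - a*y))
    (h12 : ∀ x y : ℝ, |K x y 0 1| ≤ C * Real.exp (-a*x + b*y))
    (h21 : ∀ x y : ℝ, |K x y 1 0| ≤ C * Real.exp (b*x - a*y))
    (h22 : ∀ x y : ℝ, |K x y 1 1| ≤ C * Real.exp (b*x + b*y)) :
    ∀ k : ℕ, 1 ≤ k → ∀ x : Fin k → ℝ,
      |pfaffianR (blockMatR K x)|
        ≤ (2*(k:ℝ))^((k:ℝ)/2) * C^k * ∏ i : Fin k, Real.exp (-(a-b) * x i) := by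
  intro k _ x
  let c : Fin 2 → ℝ := ![-a, b]
  have hK (y z : ℝ) (s t : Fin 2) :
      ‖K y z s t‖ ≤ C * (Real.exp (c s * y) * Real.exp (c t * z)) := by
    rw [← Real.exp_add, Real.norm_eq_abs]
    fin_cases s <;> fin_cases t
    · simpa [c, sub_eq_add_neg] using h11 y z
    · simpa [c] using h12 y z
    · simpa [c, sub_eq_add_neg] using h21 y z
    · simpa [c] using h22 y z
  calc |pfaffianR (blockMatR K x)|
      ≤ (√(2 * Fintype.card (Fin k)) * C) ^ Fintype.card (Fin k) *
          ∏ i, Real.exp (c 0 * x i) * Real.exp (c 1 * x i) := by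
        rw [pfaffianR_eq_pfaffian_submatrix, submatrix_blockMatR]
        exact pfaffian_hadamard_bound_general hskew hC.le (fun _ _ => Real.exp_nonneg _) hK x
    _ = (2 * (k : ℝ)) ^ ((k : ℝ) / 2) * C ^ k * ∏ i, Real.exp (-(a - b) * x i) := by
        rw [Fintype.card_fin, mul_pow, Real.rpow_div_two_eq_sqrt _ (by positivity),
          Real.rpow_natCast]
        simp only [← Real.exp_add, ← add_mul, neg_sub', c, Matrix.cons_val_zero,
          Matrix.cons_val_one, sub_neg_eq_add]

end
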